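/- Let k be an algebraically closed field of characteristic 0 and let A be a finitely generated commutative k-algebra which is an integral domain. Let J be a non-zero Lie ideal of Der_k(A) and let P be a maximal ideal of A which is a nonsingular point, i.e., the localization A_P is formally smooth over k. Then there exist μ ∈ J and g ∈ A such that μ(μ(g)) ∉ P. -/

import Mathlib

set_option synthInstance.maxHeartbeats 400000

/-- Derivations of a localization are, up to a denominator, derivations of the ring. -/
lemma clear_denominators_aux {k A B : Type*} [Field k] [CommRing A] [Algebra k A]
    [Algebra.FiniteType k A] [CommRing B] [Algebra k B] [Algebra A B] [IsScalarTower k A B]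
    (M : Submonoid A) [IsLocalization M B] (hinj : Function.Injective (algebraMap A B))
    (δ : Derivation k B B) :
    ∃ s ∈ M, ∃ d : Derivation k A A,
      ∀ a, algebraMap A B (d a) = algebraMap A B s * δ (algebraMap A B a) := by
  classical
  obtain ⟨S, hS⟩ := Algebra.FiniteType.out (R := k) (A := A)
  obtain ⟨s, hs⟩ := IsLocalization.exist_integer_multiples_of_finset M
    (S.image (fun a => δ (algebraMap A B a)))
  have key : ∀ a : A, ∃ c : A,
      algebraMap A B c = algebraMap A B s * δ (algebraMap A B a) := by
    intro a
    have ha : a ∈ Algebra.adjoin k (S : Set A) := by rw [hS]; trivial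
    induction ha using Algebra.adjoin_induction with
    | mem x hx =>
      obtain ⟨c, hc⟩ := hs (δ (algebraMap A B x)) (Finset.mem_image_of_mem _ hx)
      exact ⟨c, by rw [hc, Algebra.smul_def]⟩
    | algebraMap r =>
      refine ⟨0, ?_⟩
      rw [← IsScalarTower.algebraMap_apply]
      simp
    | add x y _ _ hx hy =>
      obtain ⟨c, hc⟩ := hx
      obtain ⟨e, he⟩ := hy
      exact ⟨c + e, by simp only [map_add, hc, he]; ring⟩
    | mul x y _ _ hx hy =>
      obtain ⟨c, hc⟩ := hx
      obtain ⟨e, he⟩ := hy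
      exact ⟨x * e + y * c, by
        simp only [map_add, map_mul, hc, he, Derivation.leibniz, smul_eq_mul]; ring⟩
  choose d hd using key
  refine ⟨s, s.2, Derivation.mk' (R := k)
    { toFun := d
      map_add' := fun x y => hinj (by simp only [map_add, hd]; ring)
      map_smul' := fun r x => hinj (by
        simp only [Algebra.smul_def, map_mul, hd, RingHom.id_apply, Derivation.leibniz,
          smul_eq_mul, ← IsScalarTower.algebraMap_apply, Derivation.map_algebraMap]
        ring) } ?_, hd⟩
  intro x y
  apply hinj
  simp only [LinearMap.coe_mk, AddHom.coe_mk, map_add, map_mul, hd, Derivation.leibniz,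
    smul_eq_mul]
  ring

/-- An Euler field at a rational point of a formally smooth algebra. -/
lemma euler_aux {k B : Type*} [Field k] [CommRing B] [Algebra k B]
    [Algebra.FormallySmooth k B] (m : Ideal B) (σ : B →ₐ[k] k)
    (hσ : ∀ b, b ∈ m ↔ σ b = 0) :
    ∃ h : Ω[B⁄k] →ₗ[B] (m →₀ B), ∀ b ∈ m,
      ((Finsupp.linearCombination B (id : m → m) (h (KaehlerDifferential.D k B b)) : m) : B) - b
        ∈ m ^ 2 := by
  have hmem : ∀ b, b - algebraMap k B (σ b) ∈ m := fun b => by rw [hσ]; simp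
  let L : B →ₗ[k] m.Cotangent :=
    { toFun := fun b => m.toCotangent ⟨b - algebraMap k B (σ b), hmem b⟩
      map_add' := fun x y => by
        rw [← map_add]
        congr 1
        ext
        simp only [map_add, Submodule.coe_add]
        ring
      map_smul' := fun r x => by
        rw [RingHom.id_apply, ← algebraMap_smul B r (m.toCotangent _), ← map_smul]
        congr 1
        ext
        simp [Algebra.smul_def]
        ring }
  let D : Derivation k B m.Cotangent := Derivation.mk' L (fun x y => by
    change m.toCotangent _ = x • m.toCotangent _ + y • m.toCotangent _
    rw [← map_smul, ← map_smul, ← map_add, Ideal.toCotangent_eq]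
    have : (x - algebraMap k B (σ x)) * (y - algebraMap k B (σ y)) ∈ m ^ 2 := by
      rw [pow_two]; exact Ideal.mul_mem_mul (hmem x) (hmem y)
    convert neg_mem this using 1
    simp
    ring)
  have hsurj : Function.Surjective
      (m.toCotangent ∘ₗ Finsupp.linearCombination B (id : m → m)) := by
    rw [LinearMap.coe_comp]
    exact m.toCotangent_surjective.comp (Finsupp.linearCombination_id_surjective B m)
  obtain ⟨h, hh⟩ := Module.projective_lifting_property _ D.liftKaehlerDifferential hsurj
  refine ⟨h, fun b hb => ?_⟩
  have h1 := LinearMap.congr_fun hh (KaehlerDifferential.D k B b)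
  rw [Derivation.liftKaehlerDifferential_comp_D] at h1
  have h2 : D b = m.toCotangent ⟨b, hb⟩ := by
    change m.toCotangent _ = _
    congr 1
    ext
    simp [(hσ b).1 hb]
  rw [h2] at h1
  exact (Ideal.toCotangent_eq _).1 h1

lemma euler_pow_aux {k B : Type*} [Field k] [CommRing B] [Algebra k B] (m : Ideal B)
    (E : Derivation k B B) (h0 : ∀ b, E b ∈ m) (h1 : ∀ b ∈ m, E b - b ∈ m ^ 2) (n : ℕ) :
    ∀ u ∈ m ^ n, E u - n * u ∈ m ^ (n + 1) := by
  induction n with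
  | zero => intro u _; simpa using h0 u
  | succ n ih =>
    intro u hu
    rw [pow_succ] at hu
    induction hu using Submodule.mul_induction_on' with
    | mem_mul_mem a ha b hb =>
      have e1 : a * (E b - b) ∈ m ^ (n + 1 + 1) := by
        rw [show n + 1 + 1 = n + 2 by ring, pow_add]
        exact Ideal.mul_mem_mul ha (h1 b hb)
      have e2 : (E a - n * a) * b ∈ m ^ (n + 1 + 1) := by
        rw [pow_succ]
        exact Ideal.mul_mem_mul (ih a ha) hb
      convert add_mem e1 e2 using 1
      simp only [Derivation.leibniz, smul_eq_mul]
      push_cast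
      ring
    | add x _ y _ hx hy =>
      convert add_mem hx hy using 1
      rw [map_add]
      ring

/-- Every non-zero Lie ideal of `Der_k(A)` contains a derivation `μ` with `μ(μ(g))`
non-vanishing at a given nonsingular point `P`, for some function `g`. -/
theorem exists_derivation_double_apply_nonvanishing.{u}
    (k : Type u) [Field k] [IsAlgClosed k] [CharZero k]
    (A : Type u) [CommRing A] [IsDomain A] [Algebra k A] [Algebra.FiniteType k A]
    (J : LieIdeal k (Derivation k A A)) (hJ : J ≠ ⊥)
    (P : Ideal A) [P.IsMaximal]
    (hsmooth : Algebra.FormallySmooth k (Localization.AtPrime P)) :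
    ∃ μ ∈ J, ∃ g : A, μ (μ g) ∉ P := by
  by_contra! hcon
  -- every element of `J` vanishes at `P`
  have hvan : ∀ μ ∈ J, ∀ f : A, μ f ∈ P := by
    intro μ hμ f
    have a1 := hcon μ hμ (f * f)
    have a2 := hcon μ hμ f
    simp only [Derivation.leibniz, smul_eq_mul, map_add] at a1
    have a3 : (2 : A) * (μ f * μ f) ∈ P := by
      convert sub_mem a1 (P.mul_mem_left (2 * f) a2) using 1
      ring
    have h2 : IsUnit (2 : A) := by
      have : IsUnit (2 : k) := isUnit_iff_ne_zero.2 two_ne_zero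
      have h := this.map (algebraMap k A)
      rwa [map_ofNat] at h
    have hP : P.IsPrime := inferInstance
    rw [Ideal.unit_mul_mem_iff_mem _ h2] at a3
    exact (hP.mem_or_mem a3).elim id id
  have hnoeth : IsNoetherianRing A := Algebra.FiniteType.isNoetherianRing k A
  have hnoethB : IsNoetherianRing (Localization.AtPrime P) :=
    IsLocalization.isNoetherianRing P.primeCompl _ hnoeth
  have hinj : Function.Injective (algebraMap A (Localization.AtPrime P)) :=
    IsLocalization.injective _ P.primeCompl_le_nonZeroDivisors
  -- the evaluation at `P`
  obtain ⟨σ, hσ⟩ : ∃ σ : Localization.AtPrime P →ₐ[k] k,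
      ∀ b, b ∈ IsLocalRing.maximalIdeal (Localization.AtPrime P) ↔ σ b = 0 := by
    let _ : Field (A ⧸ P) := Ideal.Quotient.field P
    have hfin : Module.Finite k (A ⧸ P) := finite_of_finite_type_of_isJacobsonRing k (A ⧸ P)
    have hbij : Function.Bijective (algebraMap k (A ⧸ P)) :=
      IsAlgClosed.algebraMap_bijective_of_isIntegral
    let e : k ≃ₐ[k] (A ⧸ P) := AlgEquiv.ofBijective (Algebra.ofId k _) hbij
    let ε : A →ₐ[k] k := (e.symm : (A ⧸ P) →ₐ[k] k).comp (Ideal.Quotient.mkₐ k P)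
    have hε : ∀ a, ε a = 0 ↔ a ∈ P := by
      intro a
      change e.symm (Ideal.Quotient.mk P a) = 0 ↔ _
      rw [EmbeddingLike.map_eq_zero_iff, Ideal.Quotient.eq_zero_iff_mem]
    have hu : ∀ y : P.primeCompl, IsUnit (ε y) := fun y =>
      isUnit_iff_ne_zero.2 fun h => y.2 ((hε _).1 h)
    let σ : Localization.AtPrime P →ₐ[k] k := IsLocalization.liftAlgHom (M := P.primeCompl) (f := ε) hu
    refine ⟨σ, fun b => ?_⟩
    obtain ⟨x, y, rfl⟩ := IsLocalization.exists_mk'_eq P.primeCompl b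
    rw [IsLocalization.AtPrime.mk'_mem_maximal_iff (Localization.AtPrime P) P x y, ← hε]
    have hσa : ∀ a, σ (algebraMap A (Localization.AtPrime P) a) = ε a := fun a =>
      IsLocalization.lift_eq (M := P.primeCompl) (g := (ε : A →+* k)) hu a
    have hs := congrArg σ (IsLocalization.mk'_spec (Localization.AtPrime P) x y)
    rw [map_mul, hσa, hσa] at hs
    rw [← hs, mul_eq_zero, or_iff_left (hu y).ne_zero]
  have hsm := hsmooth
  set B := Localization.AtPrime P with hB
  set m := IsLocalRing.maximalIdeal B with hm
  obtain ⟨h, hh⟩ := euler_aux (k := k) m σ hσ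
  let T : m → Derivation k B B := fun i =>
    ((Finsupp.lapply i : (m →₀ B) →ₗ[B] B) ∘ₗ h).compDer (KaehlerDifferential.D k B)
  let E : Derivation k B B :=
    (m.subtype ∘ₗ Finsupp.linearCombination B (id : m → m) ∘ₗ h).compDer
      (KaehlerDifferential.D k B)
  have hE0 : ∀ b, E b ∈ m := fun b => Subtype.prop _
  have hE1 : ∀ b ∈ m, E b - b ∈ m ^ 2 := hh
  have hET : ∀ n u, (∀ i, T i u ∈ m ^ n) → E u ∈ m ^ (n + 1) := by
    intro n u hu
    change ((Finsupp.linearCombination B (id : m → m) (h (KaehlerDifferential.D k B u)) : m) : B)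
      ∈ _
    rw [Finsupp.linearCombination_apply, Finsupp.sum, AddSubmonoidClass.coe_finsetSum]
    refine sum_mem fun i _ => ?_
    rw [pow_succ]
    exact Ideal.mul_mem_mul (hu i) i.2
  -- every element of `J` vanishes at `P` to every order
  have hall : ∀ n : ℕ, ∀ μ ∈ J, ∀ f : A, algebraMap A B (μ f) ∈ m ^ (n + 1) := by
    intro n
    induction n with
    | zero =>
      intro μ hμ f
      rw [zero_add, pow_one, hm, IsLocalization.AtPrime.to_map_mem_maximal_iff B P]
      exact hvan μ hμ f
    | succ n ih =>
      intro μ hμ f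
      have hder : ∀ τ : Derivation k A A, algebraMap A B (τ (μ f)) ∈ m ^ (n + 1) := by
        intro τ
        have h1 := ih ⁅τ, μ⁆ (lie_mem_right k _ J τ μ hμ) f
        have h2 := ih μ hμ (τ f)
        rw [Derivation.commutator_apply, map_sub] at h1
        simpa using add_mem h1 h2
      have h3 : E (algebraMap A B (μ f)) ∈ m ^ (n + 1 + 1) := by
        apply hET
        intro i
        obtain ⟨s, hs, d, hd⟩ := clear_denominators_aux P.primeCompl hinj (T i)
        have h4 := hder d
        rw [hd] at h4
        exact (Ideal.unit_mul_mem_iff_mem _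
          (IsLocalization.map_units B (⟨s, hs⟩ : P.primeCompl))).1 h4
      have h5 := euler_pow_aux m E hE0 hE1 (n + 1) _ (ih μ hμ f)
      have h6 : ((n + 1 : ℕ) : B) * algebraMap A B (μ f) ∈ m ^ (n + 1 + 1) := by
        convert sub_mem h3 h5 using 1
        ring
      have hun : IsUnit ((n + 1 : ℕ) : B) := by
        have : IsUnit ((n + 1 : ℕ) : k) := isUnit_iff_ne_zero.2 (Nat.cast_ne_zero.2 n.succ_ne_zero)
        have h := this.map (algebraMap k B)
        rwa [map_natCast] at h
      exact (Ideal.unit_mul_mem_iff_mem _ hun).1 h6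
  apply hJ
  rw [LieSubmodule.eq_bot_iff]
  intro μ hμ
  ext f
  apply hinj
  rw [Derivation.zero_apply, map_zero]
  have hkr := Ideal.iInf_pow_eq_bot_of_isLocalRing m (Ideal.IsPrime.ne_top inferInstance)
  rw [← Ideal.mem_bot, ← hkr, Ideal.mem_iInf]
  intro n
  exact Ideal.pow_le_pow_right (Nat.le_succ n) (hall n μ hμ f)
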